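/- Let n ≥ 3 and let f : ℝⁿ → ℂ be a smooth compactly supported function. Then ‖f‖_{L^{2n/(n−2)}(ℝⁿ)} ≤ (1/π) · ( n · vol(Bⁿ) / (n−2) )^{1/n} · ‖∇f‖_{L²(ℝⁿ)}, where vol(Bⁿ) denotes the Lebesgue measure of the unit ball of ℝⁿ and ‖∇f‖_{L²}² = ∫_{ℝⁿ} |∇f(x)|² dx. -/

import Mathlib

open MeasureTheory ENNReal Real

/-!
Write `f = 𝓕 G` and let `N` be the `L²` norm of `‖ξ‖ ^ s • G`. Cutting the frequencies at radius
`t`, Cauchy–Schwarz bounds the part of `f` coming from the ball by `√A * N * t ^ (d / 2 - s)`, where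
`d` is the dimension and `A` is the integral of `‖ξ‖ ^ (-2 * s)` over the unit ball. Where `‖f‖`
is at least twice this bound, the remaining part carries at least half of `f`, so by Plancherel
the squared mass of `f` there is at most `4 * ∫ ‖G‖ ^ 2` over `t ≤ ‖ξ‖`. Integrating this against
`2 * s * t ^ (2 * s - 1)` by the layer cake formula turns the left side into a multiple of a
power of the critical Lebesgue norm of `f` and the right side into `4 * N ^ 2`.

For `s = 1` and `f` real-valued, `N` is the `L²` norm of the operator norm of `fderiv ℝ f`, up to a
factor `2π`. Vector-valued `f` is replaced by a smooth regularisation of its modulus, whose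
derivative is no larger since the regularised norm is `1`-Lipschitz.
-/

open Module Metric Set Filter Topology
open scoped FourierTransform SchwartzMap LineDeriv ContDiff

section Plancherel

variable {E F : Type*} [NormedAddCommGroup E] [InnerProductSpace ℝ E] [MeasurableSpace E]
  [BorelSpace E] [FiniteDimensional ℝ E] [NormedAddCommGroup F]

theorem continuous_fourier [NormedSpace ℂ F] {h : E → F} (hh : Integrable h) :
    Continuous (𝓕 h) :=
  VectorFourier.fourierIntegral_continuous continuous_fourierChar (innerSL ℝ).continuous₂ hh

theorem fourier_add_of_integrable [NormedSpace ℂ F] {g h : E → F} (hg : Integrable g)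
    (hh : Integrable h) : 𝓕 (g + h) = 𝓕 g + 𝓕 h :=
  VectorFourier.fourierIntegral_add continuous_fourierChar (innerSL ℝ).continuous₂ hg hh

variable [InnerProductSpace ℂ F] [CompleteSpace F] {h : E → F}

theorem fourier_toLp_ae_eq (h₁ : Integrable h) (h₂ : MemLp h 2 volume) :
    (𝓕 (h₂.toLp h) : Lp F 2 (volume : Measure E)) =ᵐ[volume] 𝓕 h := by
  refine ae_eq_of_integral_contDiff_smul_eq ((Lp.memLp _).locallyIntegrable one_le_two)
    (continuous_fourier h₁).locallyIntegrable fun g g_smooth g_supp ↦ ?_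
  let φ : 𝓢(E, ℂ) := HasCompactSupport.toSchwartzMap (f := Complex.ofRealCLM ∘ g)
    (g_supp.comp_left rfl) (by fun_prop)
  calc ∫ x, g x • (𝓕 (h₂.toLp h) : Lp F 2 (volume : Measure E)) x
      = ∫ x, φ x • (𝓕 (h₂.toLp h) : Lp F 2 (volume : Measure E)) x := by simp [φ]
    _ = ∫ x, 𝓕 φ x • h₂.toLp h x := by
      simpa using! DFunLike.congr_fun (Lp.fourier_toTemperedDistribution_eq (h₂.toLp h)).symm φ
    _ = ∫ x, 𝓕 φ x • h x := integral_congr_ae <| by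
      filter_upwards [h₂.coeFn_toLp] with x hx using by rw [hx]
    _ = ∫ x, φ x • 𝓕 h x :=
      (VectorFourier.integral_fourierIntegral_smul_eq_flip (L := innerₗ E) continuous_fourierChar
        (innerSL ℝ).continuous₂ φ.integrable h₁).trans (by rw [flip_innerₗ]; rfl)
    _ = ∫ x, g x • 𝓕 h x := by simp [φ]

theorem eLpNorm_fourier_eq (h₁ : Integrable h) (h₂ : MemLp h 2 volume) :
    eLpNorm (𝓕 h) 2 volume = eLpNorm h 2 volume := by
  rw [← eLpNorm_congr_ae (fourier_toLp_ae_eq h₁ h₂), ← eLpNorm_congr_ae h₂.coeFn_toLp,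
    ← Lp.enorm_def, ← Lp.enorm_def, ← ofReal_norm, Lp.norm_fourier_eq, ofReal_norm]

end Plancherel

section Radial

theorem pow_pred_mul_rpow {d : ℕ} (hd : 0 < d) {y : ℝ} (hy : 0 < y) (a : ℝ) :
    y ^ (d - 1) * y ^ a = y ^ (d + a - 1) := by
  rw [← Real.rpow_natCast, ← Real.rpow_add hy, Nat.cast_pred hd]
  ring_nf

variable {E : Type*} [NormedAddCommGroup E] [NormedSpace ℝ E] [FiniteDimensional ℝ E]
  [Nontrivial E] [MeasurableSpace E] [BorelSpace E] (μ : Measure E) [μ.IsAddHaarMeasure] {a : ℝ}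

theorem integrableOn_ball_norm_rpow (ha : -finrank ℝ E < a) (r : ℝ) :
    IntegrableOn (fun x : E ↦ ‖x‖ ^ a) (ball 0 r) μ := by
  simp_rw [integrableOn_fun_norm_addHaar μ (f := (· ^ a)), smul_eq_mul]
  rw [integrableOn_congr_fun (fun y hy ↦ pow_pred_mul_rpow finrank_pos hy.1 a) measurableSet_Ioo]
  obtain hr | hr := le_total r 0
  · simp [Ioo_eq_empty_of_le hr]
  · rw [← intervalIntegrable_iff_integrableOn_Ioo_of_le hr]
    exact intervalIntegral.intervalIntegrable_rpow' (by linarith)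

theorem setIntegral_ball_norm_rpow (ha : -finrank ℝ E < a) {r : ℝ} (hr : 0 ≤ r) :
    ∫ x in ball (0 : E) r, ‖x‖ ^ a ∂μ =
      finrank ℝ E * μ.real (ball 0 1) / (finrank ℝ E + a) * r ^ (finrank ℝ E + a) := by
  have radial : (ball (0 : E) r).indicator (fun x ↦ ‖x‖ ^ a) =
      fun x ↦ (Iio r).indicator (· ^ a) ‖x‖ := by
    ext x
    exact indicator_eq_indicator (by simp) rfl
  have one_dim : ∫ y in Ioi (0 : ℝ), y ^ (finrank ℝ E - 1) • (Iio r).indicator (· ^ a) y =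
      r ^ (finrank ℝ E + a) / (finrank ℝ E + a) :=
    calc ∫ y in Ioi (0 : ℝ), y ^ (finrank ℝ E - 1) • (Iio r).indicator (· ^ a) y
        = ∫ y in Ioi 0 ∩ Iio r, y ^ (finrank ℝ E - 1) * y ^ a := by
          rw [← setIntegral_indicator measurableSet_Iio]
          simp only [smul_eq_mul, indicator_mul_right]
      _ = ∫ y in Ioo 0 r, y ^ (finrank ℝ E + a - 1) :=
          setIntegral_congr_fun measurableSet_Ioo fun y hy ↦ pow_pred_mul_rpow finrank_pos hy.1 a
      _ = r ^ (finrank ℝ E + a) / (finrank ℝ E + a) := by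
          rw [← integral_Ioc_eq_integral_Ioo, ← intervalIntegral.integral_of_le hr,
            integral_rpow (.inl (by linarith)), sub_add_cancel, Real.zero_rpow (by linarith),
            sub_zero]
  rw [← integral_indicator measurableSet_ball, radial, integral_fun_norm_addHaar, one_dim]
  simp only [nsmul_eq_mul, smul_eq_mul]
  ring

end Radial

section Comparison

variable {α β : Type*} [MeasurableSpace α] [MeasurableSpace β] {μ : Measure α} {ν : Measure β}
  {f : α → ℝ} {g : β → ℝ}

theorem lintegral_rpow_le_of_measure_superlevel_le (hf₀ : 0 ≤ᵐ[μ] f) (hf : AEMeasurable f μ)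
    (hg₀ : 0 ≤ᵐ[ν] g) (hg : AEMeasurable g ν) (h : ∀ t > 0, μ {x | t ≤ f x} ≤ ν {y | t ≤ g y})
    {p : ℝ} (hp : 0 < p) :
    ∫⁻ x, .ofReal (f x ^ p) ∂μ ≤ ∫⁻ y, .ofReal (g y ^ p) ∂ν := by
  rw [lintegral_rpow_eq_lintegral_meas_le_mul μ hf₀ hf hp,
    lintegral_rpow_eq_lintegral_meas_le_mul ν hg₀ hg hp]
  gcongr ENNReal.ofReal p * ?_
  exact setLIntegral_mono' measurableSet_Ioi fun t ht ↦ by gcongr; exact h t ht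

theorem lintegral_mul_rpow_le_of_setLIntegral_superlevel_le {v : α → ℝ≥0∞} {w : β → ℝ≥0∞}
    (hf₀ : 0 ≤ f) (hf : Measurable f) (hv : AEMeasurable v μ)
    (hg₀ : 0 ≤ g) (hg : Measurable g) (hw : AEMeasurable w ν)
    (h : ∀ t > 0, ∫⁻ x in {x | t ≤ f x}, v x ∂μ ≤ ∫⁻ y in {y | t ≤ g y}, w y ∂ν)
    {p : ℝ} (hp : 0 < p) :
    ∫⁻ x, v x * .ofReal (f x ^ p) ∂μ ≤ ∫⁻ y, w y * .ofReal (g y ^ p) ∂ν := by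
  have weighted := lintegral_rpow_le_of_measure_superlevel_le (μ := μ.withDensity v)
    (ν := ν.withDensity w) (.of_forall hf₀) hf.aemeasurable (.of_forall hg₀) hg.aemeasurable
    (fun t ht ↦ by
      rw [withDensity_apply _ (measurableSet_le measurable_const hf),
        withDensity_apply _ (measurableSet_le measurable_const hg)]
      exact h t ht) hp
  rwa [lintegral_withDensity_eq_lintegral_mul₀' hv (by fun_prop),
    lintegral_withDensity_eq_lintegral_mul₀' hw (by fun_prop)] at weighted

end Comparison

section LTwo

variable {α F : Type*} [MeasurableSpace α] {μ : Measure α} [NormedAddCommGroup F]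

theorem eLpNorm_two_sq_eq_lintegral (g : α → F) :
    eLpNorm g 2 μ ^ 2 = ∫⁻ x, ‖g x‖ₑ ^ 2 ∂μ := by
  simpa using! eLpNorm_nnreal_pow_eq_lintegral (f := g) (μ := μ) (p := 2) two_ne_zero

theorem eLpNorm_two_sq_eq_sum {ι F' : Type*} [Fintype ι] [NormedAddCommGroup F'] {g : α → F}
    {u : ι → α → F'} (hu : ∀ i, AEStronglyMeasurable (u i) μ)
    (h : ∀ x, ‖g x‖ ^ 2 = ∑ i, ‖u i x‖ ^ 2) :
    eLpNorm g 2 μ ^ 2 = ∑ i, eLpNorm (u i) 2 μ ^ 2 := by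
  have enorm_sq (x : α) : ‖g x‖ₑ ^ 2 = ∑ i, ‖u i x‖ₑ ^ 2 := by
    simp_rw [← ofReal_norm, ← ENNReal.ofReal_pow (norm_nonneg _), h,
      ENNReal.ofReal_sum_of_nonneg fun i _ ↦ sq_nonneg ‖u i x‖]
  simp_rw [eLpNorm_two_sq_eq_lintegral, enorm_sq]
  exact lintegral_finsetSum' _ fun i _ ↦ (hu i).enorm.pow_const 2

theorem eLpNorm_two_eq_ofReal_sqrt_integral {g : α → F} (hg : MemLp g 2 μ) :
    eLpNorm g 2 μ = .ofReal √(∫ x, ‖g x‖ ^ 2 ∂μ) := by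
  simpa [Real.sqrt_eq_rpow] using
    hg.eLpNorm_eq_integral_rpow_norm two_ne_zero ofNat_ne_top

end LTwo

section LowFrequency

variable {E : Type*} [NormedAddCommGroup E] [InnerProductSpace ℝ E] [FiniteDimensional ℝ E]
  [MeasurableSpace E] [BorelSpace E] {s r : ℝ}

variable (E) in
/-- The mass of the unit frequency ball for the density `‖ξ‖ ^ (-2 * s)`, which by Cauchy–Schwarz
controls the sup norm of the low-frequency part of a function with `s` derivatives in `L²`.
For `s = 1` this is `(2π)ⁿ G(1)` in the notation of the paper. -/
noncomputable def lowFreqMass (s : ℝ) : ℝ :=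
  ∫ ξ in ball (0 : E) 1, ‖ξ‖ ^ (-2 * s)

variable [Nontrivial E]

theorem lowFreqMass_eq (hs : 2 * s < finrank ℝ E) :
    lowFreqMass E s =
      finrank ℝ E * volume.real (ball (0 : E) 1) / (finrank ℝ E - 2 * s) := by
  rw [lowFreqMass, setIntegral_ball_norm_rpow volume (by linarith) zero_le_one, Real.one_rpow,
    mul_one, neg_mul, ← sub_eq_add_neg]

theorem lowFreqMass_pos (hs : 2 * s < finrank ℝ E) : 0 < lowFreqMass E s := by
  rw [lowFreqMass_eq hs]
  have vol_pos : 0 < volume.real (ball (0 : E) 1) :=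
    toReal_pos (measure_ball_pos _ _ one_pos).ne' measure_ball_lt_top.ne
  have : 0 < finrank ℝ E := finrank_pos
  have := sub_pos.2 hs
  positivity

theorem eLpNorm_norm_rpow_neg_restrict_ball (hs : 2 * s < finrank ℝ E) (hr : 0 ≤ r) :
    eLpNorm (fun ξ : E ↦ ‖ξ‖ ^ (-s)) 2 (volume.restrict (ball 0 r)) =
      .ofReal √(lowFreqMass E s * r ^ (finrank ℝ E - 2 * s)) := by
  have hs' : -finrank ℝ E < -2 * s := by linarith
  have norm_sq (ξ : E) : ‖‖ξ‖ ^ (-s)‖ ^ 2 = ‖ξ‖ ^ (-2 * s) := by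
    rw [Real.norm_of_nonneg (by positivity), ← Real.rpow_mul_natCast (norm_nonneg ξ)]
    ring_nf
  have memLp : MemLp (fun ξ : E ↦ ‖ξ‖ ^ (-s)) 2 (volume.restrict (ball 0 r)) := by
    refine (memLp_two_iff_integrable_sq_norm (by fun_prop : Measurable _).aestronglyMeasurable).2 ?_
    simp_rw [norm_sq]
    exact integrableOn_ball_norm_rpow volume hs' r
  rw [eLpNorm_two_eq_ofReal_sqrt_integral memLp]
  simp_rw [norm_sq, lowFreqMass, setIntegral_ball_norm_rpow volume hs' hr,
    setIntegral_ball_norm_rpow volume hs' zero_le_one, Real.one_rpow]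
  ring_nf

theorem eLpNorm_one_restrict_ball_le {F : Type*} [NormedAddCommGroup F] [NormedSpace ℝ F]
    {G : E → F} (hG : AEStronglyMeasurable G) (hs : 2 * s < finrank ℝ E) (hr : 0 ≤ r) :
    eLpNorm G 1 (volume.restrict (ball 0 r)) ≤
      .ofReal √(lowFreqMass E s * r ^ (finrank ℝ E - 2 * s)) *
        eLpNorm (fun ξ ↦ ‖ξ‖ ^ s • G ξ) 2 volume := by
  have factor : G =ᵐ[volume.restrict (ball 0 r)]
      (fun ξ : E ↦ ‖ξ‖ ^ (-s)) • (fun ξ ↦ ‖ξ‖ ^ s • G ξ) := by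
    filter_upwards [ae_restrict_of_ae (compl_mem_ae_iff.2 (measure_singleton (0 : E)))] with ξ hξ
    have : ‖ξ‖ ^ s ≠ 0 := (Real.rpow_pos_of_pos (norm_pos_iff.2 hξ) s).ne'
    simp [Real.rpow_neg, smul_smul, this]
  have norm_rpow (a : ℝ) : AEStronglyMeasurable (fun ξ : E ↦ ‖ξ‖ ^ a) volume :=
    (by fun_prop : Measurable _).aestronglyMeasurable
  calc eLpNorm G 1 (volume.restrict (ball 0 r))
      = eLpNorm ((fun ξ : E ↦ ‖ξ‖ ^ (-s)) • (fun ξ ↦ ‖ξ‖ ^ s • G ξ)) 1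
          (volume.restrict (ball 0 r)) := eLpNorm_congr_ae factor
    _ ≤ eLpNorm (fun ξ : E ↦ ‖ξ‖ ^ (-s)) 2 (volume.restrict (ball 0 r)) *
        eLpNorm (fun ξ ↦ ‖ξ‖ ^ s • G ξ) 2 (volume.restrict (ball 0 r)) :=
        eLpNorm_smul_le_mul_eLpNorm ((norm_rpow s).smul hG).restrict (norm_rpow (-s)).restrict
    _ ≤ _ := by
        rw [eLpNorm_norm_rpow_neg_restrict_ball hs hr]
        gcongr
        exact Measure.restrict_le_self

end LowFrequency

section FrequencySplitting

variable {E F : Type*} [NormedAddCommGroup E] [InnerProductSpace ℝ E] [MeasurableSpace E]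
  [BorelSpace E] [FiniteDimensional ℝ E] [NormedAddCommGroup F]

theorem enorm_fourier_le [NormedSpace ℂ F] (h : E → F) (x : E) :
    ‖𝓕 h x‖ₑ ≤ eLpNorm h 1 volume := by
  rw [Real.fourier_eq, eLpNorm_one_eq_lintegral_enorm]
  refine (enorm_integral_le_lintegral_enorm _).trans_eq (lintegral_congr fun ξ ↦ ?_)
  rw [← ofReal_norm, Circle.norm_smul, ofReal_norm]

theorem norm_fourier_indicator_ball_le [NormedSpace ℂ F] [Nontrivial E] {G : E → F}
    (hG : AEStronglyMeasurable G) {s : ℝ} (hs : 2 * s < finrank ℝ E) {N : ℝ} (hN₀ : 0 ≤ N)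
    (hN : eLpNorm (fun ξ ↦ ‖ξ‖ ^ s • G ξ) 2 volume ≤ .ofReal N) {r : ℝ} (hr : 0 ≤ r) (x : E) :
    ‖𝓕 ((ball 0 r).indicator G) x‖ ≤
      √(lowFreqMass E s * r ^ (finrank ℝ E - 2 * s)) * N := by
  rw [← ENNReal.ofReal_le_ofReal_iff (by positivity), ofReal_norm,
    ENNReal.ofReal_mul (by positivity)]
  calc ‖𝓕 ((ball 0 r).indicator G) x‖ₑ
      ≤ eLpNorm G 1 (volume.restrict (ball 0 r)) := by
        rw [← eLpNorm_indicator_eq_eLpNorm_restrict measurableSet_ball]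
        exact enorm_fourier_le _ x
    _ ≤ _ := eLpNorm_one_restrict_ball_le hG hs hr
    _ ≤ _ := by gcongr

variable [InnerProductSpace ℂ F] [CompleteSpace F] {G : E → F}

theorem setLIntegral_enorm_fourier_sq_le (h₁ : Integrable G) (h₂ : MemLp G 2 volume) {B : Set E}
    (hB : MeasurableSet B) {c : ℝ} (hc : ∀ x, ‖𝓕 (B.indicator G) x‖ ≤ c) :
    ∫⁻ x in {x | 2 * c ≤ ‖𝓕 G x‖}, ‖𝓕 G x‖ₑ ^ 2 ≤ 4 * ∫⁻ ξ in Bᶜ, ‖G ξ‖ₑ ^ 2 := by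
  have split (x : E) : 𝓕 G x = 𝓕 (B.indicator G) x + 𝓕 (Bᶜ.indicator G) x := by
    conv_lhs => rw [← indicator_self_add_compl B G,
      fourier_add_of_integrable (h₁.indicator hB) (h₁.indicator hB.compl)]
    rfl
  have high_dominates (x : E) (hx : 2 * c ≤ ‖𝓕 G x‖) :
      ‖𝓕 G x‖ ≤ ‖(2 : ℝ) • 𝓕 (Bᶜ.indicator G) x‖ := by
    have := norm_add_le (𝓕 (B.indicator G) x) (𝓕 (Bᶜ.indicator G) x)
    rw [← split] at this
    rw [norm_smul, Real.norm_two]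
    linarith [hc x]
  calc ∫⁻ x in {x | 2 * c ≤ ‖𝓕 G x‖}, ‖𝓕 G x‖ₑ ^ 2
      ≤ ∫⁻ x in {x | 2 * c ≤ ‖𝓕 G x‖}, ‖(2 : ℝ) • 𝓕 (Bᶜ.indicator G) x‖ₑ ^ 2 :=
        setLIntegral_mono' (measurableSet_le measurable_const
          (continuous_fourier h₁).norm.measurable) fun x hx ↦ by
            gcongr; exact enorm_le_iff_norm_le.2 (high_dominates x hx)
    _ ≤ ∫⁻ x, ‖((2 : ℝ) • 𝓕 (Bᶜ.indicator G)) x‖ₑ ^ 2 := setLIntegral_le_lintegral _ _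
    _ = 4 * eLpNorm (Bᶜ.indicator G) 2 volume ^ 2 := by
        rw [← eLpNorm_two_sq_eq_lintegral, eLpNorm_const_smul, mul_pow,
          eLpNorm_fourier_eq (h₁.indicator hB.compl) (h₂.indicator hB.compl)]
        norm_num [← ofReal_norm]
    _ = 4 * ∫⁻ ξ in Bᶜ, ‖G ξ‖ₑ ^ 2 := by
        rw [eLpNorm_indicator_eq_eLpNorm_restrict hB.compl, eLpNorm_two_sq_eq_lintegral]

variable {s : ℝ}

/- The level at which `t` is the cut-off radius is `2 * √A * N * t ^ ((d - 2 * s) / 2)`, twice the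
Cauchy–Schwarz bound for the frequencies below `t`. Parametrising the superlevel sets by `t` puts
the estimate in the form required by the layer cake comparison. -/
theorem setLIntegral_superlevel_enorm_fourier_sq_le [Nontrivial E] (h₁ : Integrable G)
    (h₂ : MemLp G 2 volume) (hs : 2 * s < finrank ℝ E) {N : ℝ} (hN₀ : 0 < N)
    (hN : eLpNorm (fun ξ ↦ ‖ξ‖ ^ s • G ξ) 2 volume ≤ .ofReal N) {t : ℝ} (ht : 0 < t) :
    ∫⁻ x in {x | t ≤ (‖𝓕 G x‖ / (2 * √(lowFreqMass E s) * N)) ^ (2 / (finrank ℝ E - 2 * s))},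
      ‖𝓕 G x‖ₑ ^ 2 ≤ ∫⁻ ξ in {ξ | t ≤ ‖ξ‖}, 4 * ‖G ξ‖ₑ ^ 2 := by
  have hA := lowFreqMass_pos hs
  have : 0 < finrank ℝ E - 2 * s := sub_pos.2 hs
  have superlevel_eq :
      {x | t ≤ (‖𝓕 G x‖ / (2 * √(lowFreqMass E s) * N)) ^ (2 / (finrank ℝ E - 2 * s))} =
        {x | 2 * (√(lowFreqMass E s * t ^ (finrank ℝ E - 2 * s)) * N) ≤ ‖𝓕 G x‖} := by
    ext x
    rw [mem_ofPred_eq, mem_ofPred_eq, ← inv_div (_ - _) 2,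
      Real.le_rpow_inv_iff_of_pos ht.le (by positivity) (by positivity),
      le_div_iff₀ (by positivity), Real.sqrt_mul hA.le, Real.sqrt_eq_rpow (t ^ _),
      ← Real.rpow_mul ht.le]
    ring_nf
  have compl_ball_eq : {ξ : E | t ≤ ‖ξ‖} = (ball 0 t)ᶜ := by ext; simp
  rw [superlevel_eq, compl_ball_eq, lintegral_const_mul' _ _ ofNat_ne_top]
  exact setLIntegral_enorm_fourier_sq_le h₁ h₂ measurableSet_ball
    (norm_fourier_indicator_ball_le h₁.1 hs hN₀.le hN ht.le)

theorem rpow_eq_mul_sq_mul_div_rpow {y K p : ℝ} (hy : 0 ≤ y) (hK : 0 < K) (hp : 2 ≤ p) :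
    y ^ p = K ^ (p - 2) * (y ^ 2 * (y / K) ^ (p - 2)) := by
  rw [Real.div_rpow hy hK.le, mul_left_comm, mul_div_cancel₀ _ (by positivity), ← Real.rpow_two,
    ← Real.rpow_add_of_nonneg hy zero_le_two (sub_nonneg.2 hp), add_sub_cancel]

theorem enorm_rpow_eq_mul_sq_mul_div_rpow {F : Type*} [SeminormedAddCommGroup F] (y : F) {K p : ℝ}
    (hK : 0 < K) (hp : 2 ≤ p) :
    ‖y‖ₑ ^ p = .ofReal (K ^ (p - 2)) * (‖y‖ₑ ^ 2 * .ofReal ((‖y‖ / K) ^ (p - 2))) := by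
  rw [← ofReal_norm, ENNReal.ofReal_rpow_of_nonneg (norm_nonneg y) (by linarith),
    ← ENNReal.ofReal_pow (norm_nonneg y), ← ENNReal.ofReal_mul (by positivity),
    ← ENNReal.ofReal_mul (by positivity), ← rpow_eq_mul_sq_mul_div_rpow (norm_nonneg y) hK hp]

theorem enorm_norm_rpow_smul_sq {E F : Type*} [SeminormedAddCommGroup E] [SeminormedAddCommGroup F]
    [NormedSpace ℝ F] (s : ℝ) (ξ : E) (y : F) :
    ‖‖ξ‖ ^ s • y‖ₑ ^ 2 = ‖y‖ₑ ^ 2 * .ofReal (‖ξ‖ ^ (2 * s)) := by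
  rw [enorm_smul, Real.enorm_of_nonneg (by positivity), mul_pow,
    ← ENNReal.ofReal_pow (by positivity), ← Real.rpow_mul_natCast (norm_nonneg ξ), mul_comm,
    Nat.cast_ofNat, mul_comm s]

theorem lintegral_enorm_fourier_rpow_le [Nontrivial E] (h₁ : Integrable G)
    (h₂ : MemLp G 2 volume) (hs₀ : 0 < s) (hs : 2 * s < finrank ℝ E) {N : ℝ} (hN₀ : 0 < N)
    (hN : eLpNorm (fun ξ ↦ ‖ξ‖ ^ s • G ξ) 2 volume ≤ .ofReal N) :
    ∫⁻ x, ‖𝓕 G x‖ₑ ^ (2 * finrank ℝ E / (finrank ℝ E - 2 * s)) ≤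
      .ofReal ((2 * √(lowFreqMass E s) * N) ^ (2 * finrank ℝ E / (finrank ℝ E - 2 * s)) /
        lowFreqMass E s) := by
  have hA := lowFreqMass_pos hs
  have : 0 < finrank ℝ E - 2 * s := sub_pos.2 hs
  set A := lowFreqMass E s
  set K := 2 * √A * N
  set p := 2 * finrank ℝ E / (finrank ℝ E - 2 * s) with hp
  have hK : 0 < K := by positivity
  have hp_sub : p - 2 = 2 / (finrank ℝ E - 2 * s) * (2 * s) := by rw [hp]; field_simp; ring
  have hp_two : 2 ≤ p := sub_nonneg.1 (by rw [hp_sub]; positivity)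
  let T (x : E) : ℝ := (‖𝓕 G x‖ / K) ^ (2 / (finrank ℝ E - 2 * s))
  have enorm_rpow (x : E) :
      ‖𝓕 G x‖ₑ ^ p = .ofReal (K ^ (p - 2)) * (‖𝓕 G x‖ₑ ^ 2 * .ofReal (T x ^ (2 * s))) := by
    rw [← Real.rpow_mul (by positivity), ← hp_sub, enorm_rpow_eq_mul_sq_mul_div_rpow _ hK hp_two]
  have measurable_fourier : Measurable fun x ↦ ‖𝓕 G x‖ := (continuous_fourier h₁).norm.measurable
  calc ∫⁻ x, ‖𝓕 G x‖ₑ ^ p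
      = .ofReal (K ^ (p - 2)) * ∫⁻ x, ‖𝓕 G x‖ₑ ^ 2 * .ofReal (T x ^ (2 * s)) := by
        simp_rw [enorm_rpow, lintegral_const_mul' _ _ ofReal_ne_top]
    _ ≤ .ofReal (K ^ (p - 2)) * ∫⁻ ξ, 4 * ‖G ξ‖ₑ ^ 2 * .ofReal (‖ξ‖ ^ (2 * s)) := by
        gcongr ENNReal.ofReal (K ^ (p - 2)) * ?_
        exact lintegral_mul_rpow_le_of_setLIntegral_superlevel_le (fun x ↦ by positivity)
          (by fun_prop) ((continuous_fourier h₁).enorm.measurable.pow_const 2).aemeasurable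
          (fun ξ ↦ norm_nonneg ξ) measurable_norm ((h₁.1.enorm.pow_const 2).const_mul 4)
          (fun t ht ↦ setLIntegral_superlevel_enorm_fourier_sq_le h₁ h₂ hs hN₀ hN ht)
          (by positivity)
    _ ≤ .ofReal (K ^ (p - 2)) * (4 * .ofReal N ^ 2) := by
        simp_rw [mul_assoc, ← enorm_norm_rpow_smul_sq, lintegral_const_mul' _ _ ofNat_ne_top,
          ← eLpNorm_two_sq_eq_lintegral]
        gcongr
    _ = .ofReal (K ^ p / A) := by
        rw [← ENNReal.ofReal_pow hN₀.le, ← ENNReal.ofReal_ofNat 4,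
          ← ENNReal.ofReal_mul (by positivity), ← ENNReal.ofReal_mul (by positivity),
          Real.rpow_sub hK, Real.rpow_two, mul_pow, mul_pow, Real.sq_sqrt hA.le]
        congr 1
        field_simp
        norm_num

theorem eLpNorm_fourier_le_of_eLpNorm_le [Nontrivial E] (h₁ : Integrable G)
    (h₂ : MemLp G 2 volume) (hs₀ : 0 < s) (hs : 2 * s < finrank ℝ E) {N : ℝ} (hN₀ : 0 < N)
    (hN : eLpNorm (fun ξ ↦ ‖ξ‖ ^ s • G ξ) 2 volume ≤ .ofReal N) :
    eLpNorm (𝓕 G) (.ofReal (2 * finrank ℝ E / (finrank ℝ E - 2 * s))) volume ≤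
      .ofReal (2 * lowFreqMass E s ^ (s / finrank ℝ E) * N) := by
  have hA := lowFreqMass_pos hs
  have : 0 < finrank ℝ E - 2 * s := sub_pos.2 hs
  have hd : (0 : ℝ) < finrank ℝ E := by linarith
  have integral_bound := lintegral_enorm_fourier_rpow_le h₁ h₂ hs₀ hs hN₀ hN
  set A := lowFreqMass E s
  set p := 2 * finrank ℝ E / (finrank ℝ E - 2 * s) with hp
  have hp₀ : 0 < p := by positivity
  have sqrt_eq : √A = A ^ (s / finrank ℝ E) * A ^ (1 / p) := by
    rw [Real.sqrt_eq_rpow, ← Real.rpow_add hA]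
    congr 1
    rw [hp]
    field_simp
    ring
  calc eLpNorm (𝓕 G) (.ofReal p) volume
      = (∫⁻ x, ‖𝓕 G x‖ₑ ^ p) ^ (1 / p) := by
        rw [eLpNorm_eq_lintegral_rpow_enorm_toReal (by simpa using hp₀) ofReal_ne_top,
          toReal_ofReal hp₀.le]
    _ ≤ .ofReal ((2 * √A * N) ^ p / A) ^ (1 / p) := by gcongr
    _ = .ofReal (2 * A ^ (s / finrank ℝ E) * N) := by
        rw [ENNReal.ofReal_rpow_of_nonneg (by positivity) (by positivity),
          Real.div_rpow (by positivity) hA.le, ← Real.rpow_mul (by positivity),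
          mul_one_div_cancel hp₀.ne', Real.rpow_one, sqrt_eq]
        congr 1
        field_simp

theorem eLpNorm_fourier_le (h₁ : Integrable G) (h₂ : MemLp G 2 volume) (hs₀ : 0 < s)
    (hs : 2 * s < finrank ℝ E) :
    eLpNorm (𝓕 G) (.ofReal (2 * finrank ℝ E / (finrank ℝ E - 2 * s))) volume ≤
      .ofReal (2 * lowFreqMass E s ^ (s / finrank ℝ E)) *
        eLpNorm (fun ξ ↦ ‖ξ‖ ^ s • G ξ) 2 volume := by
  have : Nontrivial E :=
    nontrivial_of_finrank_pos (R := ℝ) (by exact_mod_cast (by linarith : (0 : ℝ) < finrank ℝ E))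
  have hA := lowFreqMass_pos hs
  have const_pos : 0 < ENNReal.ofReal (2 * lowFreqMass E s ^ (s / finrank ℝ E)) :=
    ofReal_pos.2 (by positivity)
  refine le_mul_of_forall_lt (.inl const_pos.ne') (.inl ofReal_ne_top) fun c hc N hN ↦ ?_
  obtain rfl | hN_top := eq_or_ne N ⊤
  · simp [mul_top (const_pos.trans hc).ne']
  have hN₀ : 0 < N.toReal := toReal_pos (bot_le.trans_lt hN).ne' hN_top
  refine (eLpNorm_fourier_le_of_eLpNorm_le h₁ h₂ hs₀ hs hN₀
    (hN.le.trans_eq (ofReal_toReal hN_top).symm)).trans ?_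
  rw [ENNReal.ofReal_mul (by positivity), ofReal_toReal hN_top]
  gcongr

end FrequencySplitting

section Energy

variable {E : Type*} [NormedAddCommGroup E] [InnerProductSpace ℝ E] [FiniteDimensional ℝ E]
  [MeasurableSpace E] [BorelSpace E]

section VectorValued

variable {F : Type*} [NormedAddCommGroup F] [InnerProductSpace ℂ F] [CompleteSpace F]

theorem eLpNorm_lineDeriv_fourier (G : 𝓢(E, F)) (v : E) :
    eLpNorm (∂_{v} (𝓕 G) : 𝓢(E, F)) 2 volume =
      .ofReal (2 * π) * eLpNorm (fun ξ ↦ inner ℝ ξ v • G ξ) 2 volume := by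
  have coe_smul : ⇑(-(2 * π * Complex.I) • SchwartzMap.smulLeftCLM F (inner ℝ · v) G) =
      (-(2 * π * Complex.I)) • fun ξ ↦ inner ℝ ξ v • G ξ := by
    ext ξ
    simp [SchwartzMap.smulLeftCLM_apply_apply
      (by fun_prop : (fun ξ : E ↦ inner ℝ ξ v).HasTemperateGrowth)]
  rw [SchwartzMap.lineDerivOp_fourier_eq, SchwartzMap.fourier_coe,
    eLpNorm_fourier_eq (SchwartzMap.integrable _) (SchwartzMap.memLp _ 2 _), coe_smul,
    eLpNorm_const_smul, ← ofReal_norm]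
  simp [abs_of_pos pi_pos]

theorem sum_eLpNorm_lineDeriv_fourier_sq {ι : Type*} [Fintype ι] (b : OrthonormalBasis ι ℝ E)
    (G : 𝓢(E, F)) :
    ∑ i, eLpNorm (∂_{b i} (𝓕 G) : 𝓢(E, F)) 2 volume ^ 2 =
      (.ofReal (2 * π) * eLpNorm (fun ξ ↦ ‖ξ‖ • G ξ) 2 volume) ^ 2 := by
  have norm_sq (ξ : E) : ‖‖ξ‖ • G ξ‖ ^ 2 = ∑ i, ‖inner ℝ ξ (b i) • G ξ‖ ^ 2 := by
    simp_rw [norm_smul, mul_pow, ← Finset.sum_mul, norm_norm, Real.norm_eq_abs, sq_abs,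
      b.sum_sq_inner_left]
  simp_rw [eLpNorm_lineDeriv_fourier, mul_pow, ← Finset.mul_sum]
  rw [eLpNorm_two_sq_eq_sum (fun i ↦ ?_) norm_sq]
  exact Continuous.aestronglyMeasurable (by fun_prop)

end VectorValued

theorem eLpNorm_fderiv_eq_of_fourier_eq {u : 𝓢(E, ℝ)} {G : 𝓢(E, ℂ)}
    (h : 𝓕 G = u.postcompCLM Complex.ofRealCLM) :
    eLpNorm (fderiv ℝ u) 2 volume =
      .ofReal (2 * π) * eLpNorm (fun ξ ↦ ‖ξ‖ • G ξ) 2 volume := by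
  let b := stdOrthonormalBasis ℝ E
  have norm_lineDeriv (v x : E) : ‖(∂_{v} (𝓕 G) : 𝓢(E, ℂ)) x‖ = ‖fderiv ℝ u x v‖ := by
    have : HasFDerivAt (𝓕 G : 𝓢(E, ℂ)) (Complex.ofRealCLM.comp (fderiv ℝ u x)) x := by
      rw [h]
      exact Complex.ofRealCLM.hasFDerivAt.comp x u.differentiableAt.hasFDerivAt
    rw [SchwartzMap.lineDerivOp_apply_eq_fderiv, this.fderiv]
    simp
  have sq_eq : eLpNorm (fderiv ℝ u) 2 volume ^ 2 =
      ∑ i, eLpNorm (∂_{b i} (𝓕 G) : 𝓢(E, ℂ)) 2 volume ^ 2 := by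
    refine eLpNorm_two_sq_eq_sum
      (fun i ↦ (SchwartzMap.continuous _).aestronglyMeasurable) fun x ↦ ?_
    simp_rw [norm_lineDeriv, b.norm_dual, Real.norm_eq_abs, sq_abs]
  rw [sum_eLpNorm_lineDeriv_fourier_sq] at sq_eq
  exact (ENNReal.pow_right_strictMono two_ne_zero).injective sq_eq

theorem eLpNorm_schwartz_le_eLpNorm_fderiv (u : 𝓢(E, ℝ)) (hd : 2 < finrank ℝ E) :
    eLpNorm u (.ofReal (2 * finrank ℝ E / (finrank ℝ E - 2))) volume ≤
      .ofReal (1 / π * lowFreqMass E 1 ^ (1 / finrank ℝ E : ℝ)) *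
        eLpNorm (fderiv ℝ u) 2 volume := by
  have : Nontrivial E := nontrivial_of_finrank_pos (R := ℝ) (by lia)
  let φ : 𝓢(E, ℂ) := u.postcompCLM Complex.ofRealCLM
  have fourier_eq : 𝓕 (𝓕⁻ φ) = φ := FourierTransform.fourier_fourierInv_eq φ
  have hd' : 2 * (1 : ℝ) < finrank ℝ E := by exact_mod_cast hd
  have hA := lowFreqMass_pos hd'
  have splitting := eLpNorm_fourier_le (SchwartzMap.integrable (𝓕⁻ φ))
    (SchwartzMap.memLp (𝓕⁻ φ) 2 volume) one_pos hd'
  rw [← SchwartzMap.fourier_coe, fourier_eq] at splitting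
  have norm_eq : eLpNorm φ (.ofReal (2 * finrank ℝ E / (finrank ℝ E - 2))) volume =
      eLpNorm u (.ofReal (2 * finrank ℝ E / (finrank ℝ E - 2))) volume :=
    eLpNorm_congr_norm_ae (.of_forall fun x ↦ Complex.norm_real (u x))
  simp_rw [mul_one, Real.rpow_one, norm_eq] at splitting
  rw [eLpNorm_fderiv_eq_of_fourier_eq fourier_eq, ← mul_assoc,
    ← ENNReal.ofReal_mul (by positivity)]
  refine splitting.trans_eq ?_
  congr 2
  field_simp

end Energy

section SmoothNorm

variable {F : Type*} [NormedAddCommGroup F] {ε : ℝ}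

/-- The regularisation `√(‖z‖ ^ 2 + ε ^ 2) - ε` of the norm. The shift by `ε` makes it vanish at
the origin, so that composing with it preserves compact supports. -/
noncomputable def smoothNorm (ε : ℝ) (z : F) : ℝ :=
  √(‖z‖ ^ 2 + ε ^ 2) - ε

theorem smoothNorm_zero (hε : 0 ≤ ε) : smoothNorm ε (0 : F) = 0 := by
  simp [smoothNorm, Real.sqrt_sq hε]

theorem lipschitzWith_smoothNorm (ε : ℝ) : LipschitzWith 1 (smoothNorm ε : F → ℝ) := by
  refine .of_le_add fun z w ↦ ?_
  have norm_le_sqrt : ‖w‖ ≤ √(‖w‖ ^ 2 + ε ^ 2) := Real.le_sqrt_of_sq_le (by nlinarith)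
  have norm_sq_le : ‖z‖ ^ 2 ≤ (‖w‖ + dist z w) ^ 2 := by
    gcongr
    exact (norm_le_norm_add_norm_sub' z w).trans_eq (by rw [dist_eq_norm])
  have sqrt_le : √(‖z‖ ^ 2 + ε ^ 2) ≤ √(‖w‖ ^ 2 + ε ^ 2) + dist z w := by
    rw [Real.sqrt_le_left (by positivity), add_sq, Real.sq_sqrt (by positivity)]
    nlinarith [mul_le_mul_of_nonneg_right norm_le_sqrt (dist_nonneg (x := z) (y := w))]
  simp only [smoothNorm]
  linarith

theorem tendsto_smoothNorm (z : F) : Tendsto (smoothNorm · z) (𝓝 0) (𝓝 ‖z‖) := by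
  have : Continuous (smoothNorm · z) := by unfold smoothNorm; fun_prop
  simpa [smoothNorm] using this.tendsto 0

theorem eLpNorm_le_of_forall_smoothNorm_comp {α : Type*} [MeasurableSpace α] {μ : Measure α}
    {f : α → F} (hf : AEStronglyMeasurable f μ) {p C : ℝ≥0∞}
    (h : ∀ ε > 0, eLpNorm (smoothNorm ε ∘ f) p μ ≤ C) : eLpNorm f p μ ≤ C := by
  let ε (k : ℕ) : ℝ := 1 / (k + 1)
  have measurable (k : ℕ) : AEStronglyMeasurable (smoothNorm (ε k) ∘ f) μ :=
    (lipschitzWith_smoothNorm _).continuous.comp_aestronglyMeasurable hf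
  have tendsto_norm (x : α) : Tendsto (fun k ↦ smoothNorm (ε k) (f x)) atTop (𝓝 ‖f x‖) :=
    (tendsto_smoothNorm (f x)).comp tendsto_one_div_add_atTop_nhds_zero_nat
  calc eLpNorm f p μ
      = eLpNorm (fun x ↦ ‖f x‖) p μ := (eLpNorm_norm f).symm
    _ ≤ liminf (fun k ↦ eLpNorm (smoothNorm (ε k) ∘ f) p μ) atTop :=
        Lp.eLpNorm_lim_le_liminf_eLpNorm measurable _ (.of_forall tendsto_norm)
    _ ≤ C := liminf_le_of_frequently_le' (.of_forall fun k ↦ h _ (by positivity))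

variable [InnerProductSpace ℝ F]

theorem contDiff_smoothNorm (hε : ε ≠ 0) {n : WithTop ℕ∞} :
    ContDiff ℝ n (smoothNorm ε : F → ℝ) :=
  (((contDiff_norm_sq ℝ).add contDiff_const).sqrt fun z ↦ by positivity).sub contDiff_const

theorem norm_fderiv_smoothNorm_comp_le {E : Type*} [NormedAddCommGroup E] [NormedSpace ℝ E]
    {f : E → F} {x : E} (hε : ε ≠ 0) (hf : DifferentiableAt ℝ f x) :
    ‖fderiv ℝ (smoothNorm ε ∘ f) x‖ ≤ ‖fderiv ℝ f x‖ := by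
  rw [fderiv_comp x ((contDiff_smoothNorm hε).differentiable one_ne_zero _) hf]
  calc _ ≤ ‖fderiv ℝ (smoothNorm ε) (f x)‖ * ‖fderiv ℝ f x‖ :=
        ContinuousLinearMap.opNorm_comp_le _ _
    _ ≤ 1 * ‖fderiv ℝ f x‖ := by
        gcongr
        exact norm_fderiv_le_of_lipschitz ℝ (lipschitzWith_smoothNorm ε)
    _ = ‖fderiv ℝ f x‖ := one_mul _

end SmoothNorm

section Sobolev

variable {E F : Type*} [NormedAddCommGroup E] [InnerProductSpace ℝ E] [FiniteDimensional ℝ E]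
  [MeasurableSpace E] [BorelSpace E] [NormedAddCommGroup F] [InnerProductSpace ℝ F] {f : E → F}

theorem eLpNorm_le_eLpNorm_fderiv_of_two_lt_finrank (hd : 2 < finrank ℝ E) (hf : ContDiff ℝ ∞ f)
    (hf_supp : HasCompactSupport f) :
    eLpNorm f (.ofReal (2 * finrank ℝ E / (finrank ℝ E - 2))) volume ≤
      .ofReal (1 / π * lowFreqMass E 1 ^ (1 / finrank ℝ E : ℝ)) *
        eLpNorm (fderiv ℝ f) 2 volume := by
  refine eLpNorm_le_of_forall_smoothNorm_comp hf.continuous.aestronglyMeasurable fun ε hε ↦ ?_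
  let u : 𝓢(E, ℝ) := (hf_supp.comp_left (smoothNorm_zero hε.le)).toSchwartzMap
    ((contDiff_smoothNorm hε.ne').comp hf)
  refine (eLpNorm_schwartz_le_eLpNorm_fderiv u hd).trans ?_
  gcongr
  exact eLpNorm_mono fun x ↦
    norm_fderiv_smoothNorm_comp_le hε.ne' (hf.differentiable (by simp) x)

theorem stmt_14_general (hd : 3 ≤ finrank ℝ E) (hf : ContDiff ℝ ∞ f)
    (hf_supp : HasCompactSupport f) :
    eLpNorm f (.ofReal (2 * finrank ℝ E / (finrank ℝ E - 2))) volume ≤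
      .ofReal (1 / π * (finrank ℝ E * volume.real (ball (0 : E) 1) / (finrank ℝ E - 2)) ^
        (1 / finrank ℝ E : ℝ) * √(∫ x, ‖fderiv ℝ f x‖ ^ 2)) := by
  have : Nontrivial E := nontrivial_of_finrank_pos (R := ℝ) (by lia)
  have hd' : 2 * (1 : ℝ) < finrank ℝ E := by exact_mod_cast hd
  have memLp_fderiv : MemLp (fderiv ℝ f) 2 volume :=
    (hf.continuous_fderiv (by simp)).memLp_of_hasCompactSupport (hf_supp.fderiv ℝ)
  have sobolev := eLpNorm_le_eLpNorm_fderiv_of_two_lt_finrank hd hf hf_supp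
  rwa [eLpNorm_two_eq_ofReal_sqrt_integral memLp_fderiv, ← ENNReal.ofReal_mul' (by positivity),
    lowFreqMass_eq hd', mul_one] at sobolev

end Sobolev

/-- explicit-constant Sobolev inequality on `ℝⁿ`, Section 4 of
the paper. For `n ≥ 3` and `f` smooth with compact support,
`‖f‖_{2n/(n−2)} ≤ (1/π) (n vol(Bⁿ)/(n−2))^{1/n} ‖∇f‖₂`, where `vol(Bⁿ)` is the
Lebesgue measure of the unit ball of `ℝⁿ` and
`‖∇f‖₂ = (∫ ‖∇f(x)‖² dx)^{1/2}`. -/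
theorem stmt_14 (n : ℕ) (hn : 3 ≤ n)
    (f : EuclideanSpace ℝ (Fin n) → ℂ)
    (hf_smooth : ContDiff ℝ (⊤ : ℕ∞) f) (hf_supp : HasCompactSupport f) :
    eLpNorm f (ENNReal.ofReal (2 * n / (n - 2 : ℝ))) volume
      ≤ ENNReal.ofReal ((1 / π)
        * ((n * (volume (Metric.ball (0 : EuclideanSpace ℝ (Fin n)) 1)).toReal
            / (n - 2 : ℝ)) ^ ((1 : ℝ) / n))
        * Real.sqrt (∫ x, ‖fderiv ℝ f x‖ ^ 2)) := by
  simpa only [finrank_euclideanSpace_fin, measureReal_def] using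
    stmt_14_general (by rwa [finrank_euclideanSpace_fin]) hf_smooth hf_supp
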